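/- A binary word w is a prefix of some lower Christoffel word if and only if w is balanced and prefix normal (with respect to the letter 0). -/

import Mathlib

/-- The lower Christoffel word `w_{a,b}`: the binary word of length `a+b` whose
`k`-th letter (1-based) is `⌊kb/(a+b)⌋ - ⌊(k-1)b/(a+b)⌋` (with `false = 0`, `true = 1`). -/
def lowerChristoffel (a b : ℕ) : List Bool :=
  (List.range (a + b)).map fun i => decide ((i + 1) * b / (a + b) ≠ i * b / (a + b))

/-- The upper Christoffel word `W_{a,b}`: the binary word of length `a+b` whose
`k`-th letter is `⌈kb/(a+b)⌉ - ⌈(k-1)b/(a+b)⌉`. -/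
def upperChristoffel (a b : ℕ) : List Bool :=
  (List.range (a + b)).map fun i =>
    decide (((i + 1) * b + (a + b) - 1) / (a + b) ≠ (i * b + (a + b) - 1) / (a + b))

/-- `p` is a period of `w`: `p` is positive and `w_i = w_{i+p}` for all valid indices. -/
def HasPeriod (w : List Bool) (p : ℕ) : Prop :=
  0 < p ∧ ∀ i, i + p < w.length → w.getD i false = w.getD (i + p) false

/-- A central word: a binary word with two coprime periods `p`, `q` and length `p + q - 2`. -/
def IsCentral (w : List Bool) : Prop :=
  ∃ p q : ℕ, Nat.Coprime p q ∧ HasPeriod w p ∧ HasPeriod w q ∧ w.length + 2 = p + q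

/-- A binary word is balanced if any two factors of the same length have numbers of `1`s
differing by at most `1`. -/
def BalancedWord (w : List Bool) : Prop :=
  ∀ u v : List Bool, u <:+: w → v <:+: w → u.length = v.length →
    |(u.count true : ℤ) - (v.count true : ℤ)| ≤ 1

/-- `w^m`: the `m`-th power of the word `w`. -/
def wpow (w : List Bool) (m : ℕ) : List Bool := (List.replicate m w).flatten

/-- A word is primitive if it is not a proper power. -/
def IsPrimitiveWord (w : List Bool) : Prop := ¬ ∃ (v : List Bool) (m : ℕ), 2 ≤ m ∧ w = wpow v m

/-- A Lyndon word: a nonempty primitive word lexicographically strictly smaller than all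
of its proper nonempty suffixes (for the order `0 < 1`, i.e. `false < true`). -/
def IsLyndonWord (w : List Bool) : Prop :=
  w ≠ [] ∧ IsPrimitiveWord w ∧
    ∀ u v : List Bool, w = u ++ v → u ≠ [] → v ≠ [] → List.Lex (· < ·) w v

/-- `p` is the minimal period of `w`. -/
def IsMinPeriod (w : List Bool) (p : ℕ) : Prop :=
  HasPeriod w p ∧ ∀ q : ℕ, HasPeriod w q → p ≤ q

/-- `u` is a factor of the infinite periodic word `w^ω`. -/
def IsOmegaFactor (u w : List Bool) : Prop := ∃ m : ℕ, u <:+: wpow w m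

/-- A primitive Christoffel word: a lower or upper Christoffel word `w_{a,b}` with
`gcd(a,b) = 1`. -/
def IsPrimitiveChristoffel (c : List Bool) : Prop :=
  ∃ a b : ℕ, Nat.Coprime a b ∧ (c = lowerChristoffel a b ∨ c = upperChristoffel a b)

/-- A word is prefix normal (w.r.t. the letter `0`) if no factor has more `0`s than the
prefix of the same length. -/
def PrefixNormal (w : List Bool) : Prop :=
  ∀ u : List Bool, u <:+: w → u.count false ≤ (w.take u.length).count false

/-!
Let `f k` be the number of `1`s among the first `k` letters of a word of length `n`. The word is
balanced and prefix normal exactly when `f i + f k ≤ f (i + k) ≤ f i + f k + 1` for `i + k ≤ n`, and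
it is a prefix of `w_{a,b}` exactly when `f k = ⌊kb/(a+b)⌋` for `k ≤ n ≤ a + b`. Floors of multiples
of a fixed rational satisfy these inequalities. Conversely, the inequalities give
`f k / k < (f l + 1) / l` for `1 ≤ k, l ≤ n` by the subtractive Euclidean algorithm, so the
largest slope `f m / m` satisfies `f k ≤ k * (f m / m) < f k + 1` for all `k ≤ n`.
-/

/-- Additivity up to an error in `{0, 1}` of a function on the initial segment `{0, …, n}`: the form
in which balance and prefix normality are seen by the counting function of a word. -/
def QuasiAdditiveUpTo (n : ℕ) (f : ℕ → ℕ) : Prop :=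
  ∀ i k, i + k ≤ n → f i + f k ≤ f (i + k) ∧ f (i + k) ≤ f i + f k + 1

lemma quasiAdditiveUpTo_mul_div (n p q : ℕ) : QuasiAdditiveUpTo n fun k => k * p / q := by
  intro i k _
  rcases Nat.eq_zero_or_pos q with rfl | hq
  · simp
  · simp only [add_mul]
    refine ⟨Nat.div_add_div_le_add_div, ?_⟩
    rw [Nat.add_div hq]
    split_ifs <;> omega

lemma QuasiAdditiveUpTo.congr {n : ℕ} {f g : ℕ → ℕ} (hf : QuasiAdditiveUpTo n f)
    (hfg : ∀ k ≤ n, g k = f k) : QuasiAdditiveUpTo n g := by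
  intro i k hik
  rw [hfg i (by omega), hfg k (by omega), hfg (i + k) hik]
  exact hf i k hik

lemma QuasiAdditiveUpTo.map_zero {n : ℕ} {f : ℕ → ℕ} (hf : QuasiAdditiveUpTo n f) : f 0 = 0 := by
  have := (hf 0 0 (Nat.zero_le n)).1
  simpa using this

lemma QuasiAdditiveUpTo.mul_lt_mul_add_one {n : ℕ} {f : ℕ → ℕ} (hf : QuasiAdditiveUpTo n f)
    {k l : ℕ} (hk : 0 < k) (hkn : k ≤ n) (hln : l ≤ n) : l * f k < k * (f l + 1) := by
  rcases Nat.eq_zero_or_pos l with rfl | hl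
  · simpa using hk
  rcases le_or_gt k l with hkl | hlk
  · obtain ⟨d, rfl⟩ := Nat.exists_eq_add_of_le hkl
    have ih : d * f k < k * (f d + 1) := hf.mul_lt_mul_add_one hk hkn (by omega)
    calc (k + d) * f k = k * f k + d * f k := add_mul _ _ _
      _ < k * f k + k * (f d + 1) := by gcongr
      _ = k * (f k + f d + 1) := by ring
      _ ≤ k * (f (k + d) + 1) := by gcongr; exact (hf k d hln).1
  · obtain ⟨d, rfl⟩ := Nat.exists_eq_add_of_le hlk.le
    have ih : l * f d < d * (f l + 1) := hf.mul_lt_mul_add_one (by omega) (by omega) hln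
    calc l * f (l + d) ≤ l * (f l + f d + 1) := by gcongr; exact (hf l d hkn).2
      _ = l * (f l + 1) + l * f d := by ring
      _ < l * (f l + 1) + d * (f l + 1) := by gcongr
      _ = (l + d) * (f l + 1) := (add_mul _ _ _).symm
termination_by k + l

lemma exists_mem_forall_mul_le_mul {ι : Type*} {s : Finset ι} (hs : s.Nonempty) (f : ι → ℕ)
    {g : ι → ℕ} (hg : ∀ i ∈ s, 0 < g i) : ∃ m ∈ s, ∀ k ∈ s, f k * g m ≤ f m * g k := by
  obtain ⟨m, hm, hmax⟩ := s.exists_max_image (fun k => (f k : ℚ) / g k) hs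
  refine ⟨m, hm, fun k hk => ?_⟩
  have hgm : (0 : ℚ) < g m := by exact_mod_cast hg m hm
  have hgk : (0 : ℚ) < g k := by exact_mod_cast hg k hk
  exact_mod_cast (div_le_div_iff₀ hgk hgm).1 (hmax k hk)

theorem QuasiAdditiveUpTo.exists_eq_mul_div {n : ℕ} {f : ℕ → ℕ} (hf : QuasiAdditiveUpTo n f) :
    ∃ m, 0 < m ∧ ∀ k ≤ n, f k = k * f m / m := by
  rcases Nat.eq_zero_or_pos n with rfl | hn
  · refine ⟨1, one_pos, fun k hk => ?_⟩
    simp [Nat.le_zero.1 hk, hf.map_zero]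
  obtain ⟨m, hm, hmax⟩ := exists_mem_forall_mul_le_mul (Finset.nonempty_Icc.2 hn) f (g := id)
    fun k hk => (Finset.mem_Icc.1 hk).1
  obtain ⟨hm0, hmn⟩ := Finset.mem_Icc.1 hm
  refine ⟨m, hm0, fun k hkn => ?_⟩
  have lower : f k * m ≤ k * f m := by
    rcases Nat.eq_zero_or_pos k with rfl | hk
    · simp [hf.map_zero]
    · simpa only [id, mul_comm] using hmax k (Finset.mem_Icc.2 ⟨hk, hkn⟩)
  have upper : k * f m < (f k + 1) * m := by
    simpa only [mul_comm] using hf.mul_lt_mul_add_one hm0 hmn hkn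
  exact (Nat.div_eq_of_lt_le lower upper).symm

lemma take_drop_isInfix {α : Type*} (w : List α) (i k : ℕ) : (w.drop i).take k <:+: w :=
  (List.take_prefix _ _).isInfix.trans (List.drop_suffix _ _).isInfix

lemma exists_take_drop_eq_of_isInfix {α : Type*} {u w : List α} (h : u <:+: w) :
    ∃ i, i + u.length ≤ w.length ∧ (w.drop i).take u.length = u := by
  obtain ⟨p, s, rfl⟩ := h
  exact ⟨p.length, by simp, by simp⟩

/-- The counting function of a binary word: the number of `1`s in its prefix of length `k`. It is
constant for `k ≥ w.length`. -/
def prefixOnes (w : List Bool) (k : ℕ) : ℕ := (w.take k).count true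

@[simp]
lemma prefixOnes_zero (w : List Bool) : prefixOnes w 0 = 0 := by simp [prefixOnes]

lemma prefixOnes_le (w : List Bool) (k : ℕ) : prefixOnes w k ≤ k :=
  List.count_le_length.trans (List.length_take_le k w)

lemma prefixOnes_add (w : List Bool) (i k : ℕ) :
    prefixOnes w (i + k) = prefixOnes w i + ((w.drop i).take k).count true := by
  rw [prefixOnes, List.take_add, List.count_append, prefixOnes]

lemma prefixOnes_succ {w : List Bool} {k : ℕ} (hk : k < w.length) :
    prefixOnes w (k + 1) = prefixOnes w k + w[k].toNat := by
  rw [prefixOnes, ← List.take_append_getElem hk, List.count_append, prefixOnes]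
  cases w[k] <;> rfl

lemma count_false_take_add_prefixOnes {w : List Bool} {k : ℕ} (hk : k ≤ w.length) :
    (w.take k).count false + prefixOnes w k = k :=
  (List.count_false_add_count_true _).trans (List.length_take_of_le hk)

lemma prefix_iff_prefixOnes_eq {w v : List Bool} :
    w <+: v ↔ w.length ≤ v.length ∧ ∀ k ≤ w.length, prefixOnes w k = prefixOnes v k := by
  constructor
  · rintro ⟨t, rfl⟩
    refine ⟨by simp, fun k hk => ?_⟩
    rw [prefixOnes, prefixOnes, List.take_append_of_le_length hk]
  · rintro ⟨hlen, h⟩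
    refine List.prefix_iff_getElem.2 ⟨hlen, fun k hk => ?_⟩
    have hsucc := h (k + 1) hk
    rw [prefixOnes_succ hk, prefixOnes_succ (hk.trans_le hlen), h k hk.le] at hsucc
    exact Function.LeftInverse.injective Bool.ofNat_toNat (Nat.add_left_cancel hsucc)

lemma balancedWord_iff_prefixOnes {w : List Bool} :
    BalancedWord w ↔ ∀ i j k, i + k ≤ w.length → j + k ≤ w.length →
      prefixOnes w (i + k) + prefixOnes w j ≤ prefixOnes w (j + k) + prefixOnes w i + 1 := by
  constructor
  · intro h i j k hi hj
    have hlen : ((w.drop i).take k).length = ((w.drop j).take k).length := by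
      simp only [List.length_take, List.length_drop]
      omega
    have hcount := (abs_le.1
      (h _ _ (take_drop_isInfix w i k) (take_drop_isInfix w j k) hlen)).2
    rw [prefixOnes_add w i, prefixOnes_add w j]
    omega
  · intro h u v hu hv huv
    obtain ⟨i, hi, hui⟩ := exists_take_drop_eq_of_isInfix hu
    obtain ⟨j, hj, hvj⟩ := exists_take_drop_eq_of_isInfix hv
    have hij := h i j u.length hi (huv ▸ hj)
    have hji := h j i u.length (huv ▸ hj) hi
    rw [prefixOnes_add w i, prefixOnes_add w j, hui, huv, hvj] at hij hji
    rw [abs_le]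
    omega

lemma prefixNormal_iff_prefixOnes {w : List Bool} :
    PrefixNormal w ↔ ∀ i k, i + k ≤ w.length →
      prefixOnes w i + prefixOnes w k ≤ prefixOnes w (i + k) := by
  constructor
  · intro h i k hik
    have hlen : ((w.drop i).take k).length = k := by
      simp only [List.length_take, List.length_drop]
      omega
    have hle := h _ (take_drop_isInfix w i k)
    have hfactor := List.count_false_add_count_true ((w.drop i).take k)
    have htake := count_false_take_add_prefixOnes (w := w) (k := k) (by omega)
    rw [hlen] at hle hfactor
    rw [prefixOnes_add]
    omega
  · intro h u hu
    obtain ⟨i, hi, hui⟩ := exists_take_drop_eq_of_isInfix hu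
    have hle := h i u.length hi
    have hfactor := List.count_false_add_count_true u
    have htake := count_false_take_add_prefixOnes (w := w) (k := u.length) (by omega)
    rw [prefixOnes_add, hui] at hle
    omega

theorem quasiAdditiveUpTo_prefixOnes_iff {w : List Bool} :
    QuasiAdditiveUpTo w.length (prefixOnes w) ↔ BalancedWord w ∧ PrefixNormal w := by
  rw [balancedWord_iff_prefixOnes, prefixNormal_iff_prefixOnes]
  constructor
  · refine fun h => ⟨fun i j k hi hj => ?_, fun i k hik => (h i k hik).1⟩
    have upper := (h i k hi).2
    have lower := (h j k hj).1
    omega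
  · rintro ⟨hbalanced, hnormal⟩ i k hik
    have upper := hbalanced i 0 k hik (by omega)
    rw [prefixOnes_zero, zero_add] at upper
    exact ⟨hnormal i k hik, by omega⟩

lemma prefixOnes_map_range {n : ℕ} {f : ℕ → ℕ}
    (hf : ∀ i < n, f i ≤ f (i + 1) ∧ f (i + 1) ≤ f i + 1) {k : ℕ} (hk : k ≤ n) :
    f 0 + prefixOnes ((List.range n).map fun i => decide (f (i + 1) ≠ f i)) k = f k := by
  induction k with
  | zero => simp
  | succ k ih =>
    have hstep : f k + (decide (f (k + 1) ≠ f k)).toNat = f (k + 1) := by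
      have := hf k hk
      by_cases h : f (k + 1) = f k
      · simp [h]
      · simp only [h, ne_eq, not_false_eq_true, decide_true, Bool.toNat_true]
        omega
    rw [prefixOnes_succ (by simpa using hk), ← add_assoc, ih (by omega)]
    simpa only [List.getElem_map, List.getElem_range] using hstep

@[simp]
lemma length_lowerChristoffel (a b : ℕ) : (lowerChristoffel a b).length = a + b := by
  simp [lowerChristoffel]

lemma prefixOnes_lowerChristoffel {a b k : ℕ} (hk : k ≤ a + b) :
    prefixOnes (lowerChristoffel a b) k = k * b / (a + b) := by
  have hstep (i : ℕ) : i * b / (a + b) ≤ (i + 1) * b / (a + b) ∧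
      (i + 1) * b / (a + b) ≤ i * b / (a + b) + 1 := by
    rcases Nat.eq_zero_or_pos (a + b) with h0 | hpos
    · simp [h0]
    · rw [add_one_mul, ← Nat.add_div_right _ hpos]
      exact ⟨Nat.div_le_div_right (by omega), Nat.div_le_div_right (by omega)⟩
  simpa [lowerChristoffel] using prefixOnes_map_range (fun i _ => hstep i) hk

theorem prefix_lowerChristoffel_iff {w : List Bool} {a b : ℕ} :
    w <+: lowerChristoffel a b ↔
      w.length ≤ a + b ∧ ∀ k ≤ w.length, prefixOnes w k = k * b / (a + b) := by
  rw [prefix_iff_prefixOnes_eq, length_lowerChristoffel]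
  refine and_congr_right fun hlen => forall₂_congr fun k hk => ?_
  rw [prefixOnes_lowerChristoffel (hk.trans hlen)]

/-- A binary word is a prefix of some lower Christoffel word iff it is
balanced and prefix normal. -/
theorem stmt18 (w : List Bool) :
    (∃ a b : ℕ, (a ≠ 0 ∨ b ≠ 0) ∧ w <+: lowerChristoffel a b) ↔
    (BalancedWord w ∧ PrefixNormal w) := by
  rw [← quasiAdditiveUpTo_prefixOnes_iff]
  constructor
  · rintro ⟨a, b, -, hw⟩
    exact (quasiAdditiveUpTo_mul_div _ b (a + b)).congr (prefix_lowerChristoffel_iff.1 hw).2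
  · intro hw
    obtain ⟨m, hm, hslope⟩ := hw.exists_eq_mul_div
    -- The factor `N` makes the Christoffel word of slope `prefixOnes w m / m` longer than `w`.
    let N := w.length + 1
    have hsum : (m - prefixOnes w m) * N + prefixOnes w m * N = m * N := by
      rw [← add_mul, Nat.sub_add_cancel (prefixOnes_le w m)]
    have hpos : 0 < m * N := Nat.mul_pos hm w.length.succ_pos
    refine ⟨(m - prefixOnes w m) * N, prefixOnes w m * N, by omega,
      prefix_lowerChristoffel_iff.2 ⟨?_, fun k hk => ?_⟩⟩
    · rw [hsum]
      exact w.length.le_succ.trans (Nat.le_mul_of_pos_left N hm)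
    · rw [hsum, ← mul_assoc, Nat.mul_div_mul_right _ _ w.length.succ_pos]
      exact hslope k hk
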